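/- arXiv:0912.3856 — 4 statements merged into one kernel-verified Lean document; each statement's English description precedes it below -/
import Mathlib

section
/- For every state X in the feasible domain Ω and all indices i, j ∈ {1,…,Q}, the partial derivative of the total system cost 𝒞 with respect to the variable x_j^i exists and equals the payoff F_j^i(X); that is, ∂𝒞/∂x_j^i (X) = 1/(C^i − Σ_{l=1}^Q x_l^i) + p_j^i + (Σ_{l=1}^Q x_l^i)/(C^i − Σ_{l=1}^Q x_l^i)². -/
open Finset Set

/-- The feasible domain Ω: all entries nonnegative and each column sum below capacity. -/
def feasible {Q : ℕ} (C : Fin Q → ℝ) : Set (Fin Q → Fin Q → ℝ) :=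
  {X | (∀ j i, 0 ≤ X j i) ∧ ∀ i, (∑ l, X l i) < C i}

/-- The total system cost 𝒞(X). -/
noncomputable def cost {Q : ℕ} (C : Fin Q → ℝ) (p : Fin Q → Fin Q → ℝ)
    (X : Fin Q → Fin Q → ℝ) : ℝ :=
  ∑ i, ((∑ r, X r i) / (C i - ∑ l, X l i) + ∑ r, p r i * X r i)

/-- The payoff F_j^i(X) of option i to mTracker j. -/
noncomputable def payoff {Q : ℕ} (C : Fin Q → ℝ) (p : Fin Q → Fin Q → ℝ)
    (X : Fin Q → Fin Q → ℝ) (j i : Fin Q) : ℝ :=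
  1 / (C i - ∑ l, X l i) + p j i + (∑ l, X l i) / (C i - ∑ l, X l i) ^ 2

/-- The linear functional `X ↦ X j i` on matrices: the differential `dx_j^i`, in terms of which
the differential of the cost is written. -/
def entryCLM (R : Type*) [Semiring R] [TopologicalSpace R] {ι κ : Type*} (j : ι) (i : κ) :
    (ι → κ → R) →L[R] R where
  toFun X := X j i
  map_add' _ _ := rfl
  map_smul' _ _ := rfl

@[simp]
theorem entryCLM_apply {R : Type*} [Semiring R] [TopologicalSpace R] {ι κ : Type*} (j : ι) (i : κ)
    (X : ι → κ → R) : entryCLM R j i X = X j i :=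
  rfl

section NontriviallyNormedField

variable {𝕜 : Type*} [NontriviallyNormedField 𝕜]

theorem hasDerivAt_update_comp {ι : Type*} [DecidableEq ι] {E : ι → Type*}
    [∀ i, NormedAddCommGroup (E i)] [∀ i, NormedSpace 𝕜 (E i)] (x : ∀ i, E i) (i : ι)
    {f : 𝕜 → E i} {f' : E i} {t : 𝕜} (hf : HasDerivAt f f' t) :
    HasDerivAt (fun t => Function.update x i (f t)) (Pi.single i f') t := by
  refine hasDerivAt_pi.2 fun k => ?_
  rcases eq_or_ne k i with rfl | hk
  · simpa only [Function.update_self, Pi.single_eq_same] using hf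
  · simpa only [Function.update_of_ne hk, Pi.single_eq_of_ne hk] using hasDerivAt_const t (x k)

-- The derivative is `c / (c - s) ^ 2`, split into the two congestion terms of the payoff.
theorem hasDerivAt_div_const_sub {c s : 𝕜} (hs : s ≠ c) :
    HasDerivAt (fun x => x / (c - x)) (1 / (c - s) + s / (c - s) ^ 2) s := by
  have hcs : c - s ≠ 0 := sub_ne_zero.2 hs.symm
  refine ((hasDerivAt_id' s).fun_div ((hasDerivAt_id' s).const_sub c) hcs).congr_deriv ?_
  field_simp
  ring

theorem hasFDerivAt_sum_div_const_sub_add_sum_mul {ι : Type*} [Fintype ι] {c : 𝕜} (q : ι → 𝕜)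
    {y : ι → 𝕜} (hy : ∑ r, y r ≠ c) :
    HasFDerivAt (fun y : ι → 𝕜 => (∑ r, y r) / (c - ∑ r, y r) + ∑ r, q r * y r)
      (∑ j, (1 / (c - ∑ r, y r) + q j + (∑ r, y r) / (c - ∑ r, y r) ^ 2) •
        (ContinuousLinearMap.proj j : (ι → 𝕜) →L[𝕜] 𝕜)) y := by
  have hentry (j : ι) : HasFDerivAt (fun y : ι → 𝕜 => y j)
      (ContinuousLinearMap.proj j : (ι → 𝕜) →L[𝕜] 𝕜) y := hasFDerivAt_apply j y
  have hload := HasFDerivAt.fun_sum (u := univ) fun j _ => hentry j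
  have hprice := HasFDerivAt.fun_sum (u := univ) fun j _ => (hentry j).const_mul (q j)
  refine (((hasDerivAt_div_const_sub hy).comp_hasFDerivAt y hload).fun_add hprice).congr_fderiv ?_
  rw [smul_sum, ← sum_add_distrib]
  exact sum_congr rfl fun j _ => by rw [← add_smul, add_right_comm]

end NontriviallyNormedField

section Cost

variable {Q : ℕ} {C : Fin Q → ℝ} (p : Fin Q → Fin Q → ℝ) {X : Fin Q → Fin Q → ℝ}

theorem hasFDerivAt_cost (hX : ∀ i, ∑ l, X l i ≠ C i) :
    HasFDerivAt (cost C p) (∑ i, ∑ j, payoff C p X j i • entryCLM ℝ j i) X := by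
  refine HasFDerivAt.fun_sum fun i _ => ?_
  have hcolumn : HasFDerivAt (fun (Y : Fin Q → Fin Q → ℝ) j => Y j i)
      (ContinuousLinearMap.pi fun j => entryCLM ℝ j i) X :=
    hasFDerivAt_pi.2 fun j => (entryCLM ℝ j i).hasFDerivAt
  refine ((hasFDerivAt_sum_div_const_sub_add_sum_mul (p · i) (hX i)).comp X
    hcolumn).congr_fderiv ?_
  ext Y
  simp [payoff]

theorem partial_deriv_cost_eq_payoff_general (hX : ∀ i, ∑ l, X l i ≠ C i) (i j : Fin Q) :
    HasDerivAt (fun t : ℝ => cost C p (Function.update X j (Function.update (X j) i t)))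
      (payoff C p X j i) (X j i) := by
  have hcurve := hasDerivAt_update_comp X j (hasDerivAt_update (X j) i (X j i))
  refine ((hasFDerivAt_cost p hX).comp_hasDerivAt_of_eq (X j i) hcurve (by simp)).congr_deriv ?_
  simp [Pi.single_apply, ite_apply]

end Cost

/-- For every state X in the feasible domain Ω and all indices i, j, the partial derivative
of the total system cost 𝒞 with respect to x_j^i exists and equals the payoff F_j^i(X). -/
theorem partial_deriv_cost_eq_payoff (Q : ℕ) (hQ : 1 ≤ Q)
    (C : Fin Q → ℝ) (hC : ∀ i, 0 < C i)
    (p : Fin Q → Fin Q → ℝ) (hp : ∀ j i, 0 ≤ p j i)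
    (X : Fin Q → Fin Q → ℝ) (hX : X ∈ feasible C) (i j : Fin Q) :
    HasDerivAt (fun t : ℝ => cost C p (Function.update X j (Function.update (X j) i t)))
      (payoff C p X j i) (X j i) :=
  partial_deriv_cost_eq_payoff_general p (fun k => (hX.2 k).ne) i j
end

section
/- Fix a load vector x = (x_1,…,x_Q) with x_j > 0 for all j, and suppose X̂ ∈ F(x) is a Wardrop equilibrium, i.e., for every j ∈ {1,…,Q}, every r with x̂_j^r > 0, and every i ∈ {1,…,Q}, F_j^r(X̂) ≤ F_j^i(X̂). Then X̂ is a global minimizer of the total system cost 𝒞 over the feasible set F(x); that is, 𝒞(X̂) ≤ 𝒞(X) for all X ∈ F(x). -/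
open Finset Set

/-- The feasible set F(x) of states in Ω whose row sums match the load vector x. -/
def feasLoad {Q : ℕ} (C : Fin Q → ℝ) (x : Fin Q → ℝ) : Set (Fin Q → Fin Q → ℝ) :=
  {X | X ∈ feasible C ∧ ∀ j, (∑ i, X j i) = x j}

/-!
The payoffs are the partial derivatives of the cost: `payoff C p X j i = ∂𝒞/∂x_j^i (X)`. At a
Wardrop equilibrium `Y` each row of demand sits on the options of minimal payoff, so shifting demand
within rows cannot lower the cost to first order: `⟨∇𝒞(Y), X - Y⟩ ≥ 0` for every nonnegative `X`
with the same row sums. Since `𝒞` is convex on `Ω`, this first-order condition is sufficient for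
global optimality.
-/

section VariationalInequality

variable {ι κ : Type*}

/-- Wardrop's equilibrium condition for a state `Y` under payoffs `G`: each user `j` sends demand
only to options whose payoff `G j i` is minimal. The payoffs are those realised at `Y`, so `G` is a
matrix rather than a function of the state. -/
def IsWardropEquilibrium (G Y : ι → κ → ℝ) : Prop :=
  ∀ j r i, 0 < Y j r → G j r ≤ G j i

lemma sum_mul_le_sum_mul_of_support_minimal {R : Type*} [Fintype ι] [Semiring R] [PartialOrder R]
    [IsOrderedRing R] {f u v : ι → R} (hu : ∀ i, 0 ≤ u i) (hv : ∀ i, 0 ≤ v i)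
    (huv : ∑ i, u i = ∑ i, v i) (hmin : ∀ r i, 0 < u r → f r ≤ f i) :
    ∑ i, f i * u i ≤ ∑ i, f i * v i := by
  by_cases hsupp : ∃ r, 0 < u r
  · obtain ⟨r, hr⟩ := hsupp
    calc ∑ i, f i * u i ≤ ∑ i, f r * u i := by
          refine sum_le_sum fun i _ => ?_
          rcases (hu i).eq_or_lt with hzero | hpos
          · simp [← hzero]
          · exact mul_le_mul_of_nonneg_right (hmin i r hpos) hpos.le
      _ = ∑ i, f r * v i := by rw [← mul_sum, ← mul_sum, huv]
      _ ≤ ∑ i, f i * v i :=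
          sum_le_sum fun i _ => mul_le_mul_of_nonneg_right (hmin r i hr) (hv i)
  · have hu_zero : ∀ i, u i = 0 := fun i =>
      ((hu i).eq_or_lt.resolve_right (not_exists.1 hsupp i)).symm
    have hv_zero : ∀ i, v i = 0 := by
      simpa [hu_zero, sum_eq_zero_iff_of_nonneg, hv] using huv.symm
    simp [hu_zero, hv_zero]

lemma IsWardropEquilibrium.sum_mul_sub_nonneg [Fintype ι] [Fintype κ]
    {G Y X : ι → κ → ℝ} (hG : IsWardropEquilibrium G Y) (hY : 0 ≤ Y) (hX : 0 ≤ X)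
    (hXY : ∀ j, ∑ i, X j i = ∑ i, Y j i) :
    0 ≤ ∑ j, ∑ i, G j i * (X j i - Y j i) := by
  refine sum_nonneg fun j _ => ?_
  simp only [mul_sub, sum_sub_distrib, sub_nonneg]
  exact sum_mul_le_sum_mul_of_support_minimal (hY j) (hX j) (hXY j).symm (hG j)

end VariationalInequality

section ConvexFunctions

lemma le_sub_of_convexOn_of_hasLineDerivAt {E : Type*} [AddCommGroup E] [Module ℝ E] {s : Set E}
    {f : E → ℝ} {f' : ℝ} {x y : E} (hf : ConvexOn ℝ s f) (hx : x ∈ s) (hy : y ∈ s)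
    (hf' : HasLineDerivAt ℝ f f' x (y - x)) :
    f' ≤ f y - f x := by
  have hconv := hf.comp_affineMap (AffineMap.lineMap x y)
  have hderiv : HasDerivAt (f ∘ AffineMap.lineMap (k := ℝ) x y) f' 0 := by
    simpa [HasLineDerivAt, Function.comp_def, AffineMap.lineMap_apply, add_comm] using hf'
  simpa [slope_def_field] using
    hconv.le_slope_of_hasDerivAt (by simpa using hx) (by simpa using hy) zero_lt_one hderiv

lemma convexOn_sum {𝕜 E β ι : Type*} [Semiring 𝕜] [PartialOrder 𝕜] [AddCommMonoid E] [SMul 𝕜 E]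
    [AddCommMonoid β] [PartialOrder β] [IsOrderedAddMonoid β] [DistribSMul 𝕜 β] {t : Finset ι}
    {s : Set E} {f : ι → E → β} (hs : Convex 𝕜 s) (hf : ∀ i ∈ t, ConvexOn 𝕜 s (f i)) :
    ConvexOn 𝕜 s fun x => ∑ i ∈ t, f i x := by
  refine ⟨hs, fun x hx y hy a b ha hb hab => ?_⟩
  simp only [smul_sum, ← sum_add_distrib]
  exact sum_le_sum fun i hi => (hf i hi).2 hx hy ha hb hab

lemma hasLineDerivAt_of_isLinearMap {𝕜 E F : Type*} [NontriviallyNormedField 𝕜] [AddCommGroup E]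
    [Module 𝕜 E] [NormedAddCommGroup F] [NormedSpace 𝕜 F] {f : E → F} (hf : IsLinearMap 𝕜 f)
    (x v : E) : HasLineDerivAt 𝕜 f (f v) x v := by
  simpa [HasLineDerivAt, hf.map_add, hf.map_smul] using
    ((hasDerivAt_id (0 : 𝕜)).smul_const (f v)).const_add (f x)

end ConvexFunctions

theorem wardrop_is_minimizer_general {ι κ : Type*} [Fintype ι] [Fintype κ]
    {S : Set (ι → κ → ℝ)} {Φ : (ι → κ → ℝ) → ℝ} {G Y : ι → κ → ℝ} (hΦ : ConvexOn ℝ S Φ)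
    (hgrad : ∀ V, HasLineDerivAt ℝ Φ (∑ j, ∑ i, G j i * V j i) Y V)
    (hYS : Y ∈ S) (hY : 0 ≤ Y) (hG : IsWardropEquilibrium G Y) {X : ι → κ → ℝ}
    (hXS : X ∈ S) (hX : 0 ≤ X) (hXY : ∀ j, ∑ i, X j i = ∑ i, Y j i) :
    Φ Y ≤ Φ X :=
  sub_nonneg.1 <| (hG.sum_mul_sub_nonneg hY hX hXY).trans <|
    le_sub_of_convexOn_of_hasLineDerivAt hΦ hYS hXS (hgrad (X - Y))

section CongestionCost

lemma convexOn_div_sub {𝕜 : Type*} [Field 𝕜] [LinearOrder 𝕜] [IsStrictOrderedRing 𝕜] {c : 𝕜}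
    (hc : 0 ≤ c) : ConvexOn 𝕜 (Iio c) fun s => s / (c - s) := by
  have hinv : ConvexOn 𝕜 (Iio c) fun s => (c - s)⁻¹ := by
    simpa [Function.comp_def, Set.preimage, sub_pos, Iio_def] using
      (convexOn_zpow (𝕜 := 𝕜) (-1)).comp_affineMap (AffineMap.const 𝕜 𝕜 c - AffineMap.id 𝕜 𝕜)
  refine ((hinv.smul hc).add_const (-1)).congr fun s hs => ?_
  have hne : c - s ≠ 0 := (sub_pos.2 hs).ne'
  change c * (c - s)⁻¹ + -1 = s / (c - s)
  field_simp
  ring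

lemma hasDerivAt_div_sub {𝕜 : Type*} [NontriviallyNormedField 𝕜] {c s : 𝕜} (hs : s ≠ c) :
    HasDerivAt (fun s => s / (c - s)) (1 / (c - s) + s / (c - s) ^ 2) s := by
  have hne : c - s ≠ 0 := sub_ne_zero.2 hs.symm
  refine ((hasDerivAt_id' s).fun_div ((hasDerivAt_id' s).const_sub c) hne).congr_deriv ?_
  field_simp
  ring

lemma isLinearMap_sum_mul_apply {ι κ R : Type*} [Fintype ι] [CommSemiring R] (w : ι → R) (i : κ) :
    IsLinearMap R fun X : ι → κ → R => ∑ r, w r * X r i where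
  map_add X Y := by simp [mul_add, sum_add_distrib]
  map_smul a X := by simp [mul_sum, mul_left_comm]

lemma isLinearMap_sum_apply {ι κ R : Type*} [Fintype ι] [CommSemiring R] (i : κ) :
    IsLinearMap R fun X : ι → κ → R => ∑ r, X r i := by
  simpa using isLinearMap_sum_mul_apply (1 : ι → R) i

variable {Q : ℕ}

lemma convex_feasible (C : Fin Q → ℝ) : Convex ℝ (feasible C) := by
  have hload : Convex ℝ {X : Fin Q → Fin Q → ℝ | ∀ i, ∑ l, X l i < C i} := by
    rw [ofPred_forall]
    exact convex_iInter fun i => convex_halfSpace_lt (isLinearMap_sum_apply i) (C i)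
  exact (convex_Ici (𝕜 := ℝ) (0 : Fin Q → Fin Q → ℝ)).inter hload

lemma convexOn_cost {C : Fin Q → ℝ} (hC : ∀ i, 0 ≤ C i) (p : Fin Q → Fin Q → ℝ) :
    ConvexOn ℝ (feasible C) (cost C p) := by
  refine convexOn_sum (convex_feasible C) fun i _ => ConvexOn.add ?_ ?_
  · exact ((convexOn_div_sub (hC i)).comp_linearMap (isLinearMap_sum_apply i).mk').subset
      (fun X hX => hX.2 i) (convex_feasible C)
  · exact (isLinearMap_sum_mul_apply (p · i) i).mk'.convexOn (convex_feasible C)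

lemma hasLineDerivAt_cost {C : Fin Q → ℝ} (p : Fin Q → Fin Q → ℝ) {Y : Fin Q → Fin Q → ℝ}
    (hY : ∀ i, ∑ l, Y l i ≠ C i) (V : Fin Q → Fin Q → ℝ) :
    HasLineDerivAt ℝ (cost C p) (∑ j, ∑ i, payoff C p Y j i * V j i) Y V := by
  have hcolumn (i : Fin Q) : HasLineDerivAt ℝ
      (fun X => (∑ r, X r i) / (C i - ∑ l, X l i) + ∑ r, p r i * X r i)
      (∑ j, payoff C p Y j i * V j i) Y V := by
    have hload := hasLineDerivAt_of_isLinearMap (isLinearMap_sum_apply (R := ℝ) i) Y V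
    have hlatency := (hasDerivAt_div_sub (hY i)).comp_of_eq (0 : ℝ) hload (by simp)
    have htransit := hasLineDerivAt_of_isLinearMap (isLinearMap_sum_mul_apply (p · i) i) Y V
    refine (hlatency.add htransit).congr_deriv ?_
    rw [mul_sum, ← sum_add_distrib]
    exact sum_congr rfl fun j _ => by rw [payoff]; ring
  rw [sum_comm]
  exact HasDerivAt.fun_sum fun i _ => hcolumn i

end CongestionCost

/-- A Wardrop equilibrium is a global minimizer of the total system cost over the
feasible set F(x). -/
theorem wardrop_is_minimizer (Q : ℕ) (hQ : 1 ≤ Q)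
    (C : Fin Q → ℝ) (hC : ∀ i, 0 < C i)
    (p : Fin Q → Fin Q → ℝ) (hp : ∀ j i, 0 ≤ p j i)
    (x : Fin Q → ℝ) (hx : ∀ j, 0 < x j)
    (Xh : Fin Q → Fin Q → ℝ) (hXh : Xh ∈ feasLoad C x)
    (hwardrop : ∀ j r i, 0 < Xh j r → payoff C p Xh j r ≤ payoff C p Xh j i) :
    ∀ X ∈ feasLoad C x, cost C p Xh ≤ cost C p X := by
  intro X hX
  exact wardrop_is_minimizer_general (convexOn_cost (fun i => (hC i).le) p)
    (hasLineDerivAt_cost p fun i => (hXh.1.2 i).ne) hXh.1 hXh.1.1 hwardrop hX.1 hX.1.1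
    fun j => (hX.2 j).trans (hXh.2 j).symm
end

section
/- Fix a load vector x with x_j > 0 for all j and F(x) ≠ ∅, and suppose X* ∈ F(x) is a global minimizer of 𝒞 over F(x). Let λ_1,…,λ_Q be reals such that for every j: F_j^i(X*) = λ_j whenever x*_j^i > 0, and F_j^i(X*) ≥ λ_j for all i (such λ exist by the Wardrop property of minimizers). Then λ is a subgradient of the minimum system cost: for every load vector y with y_j > 0 for all j and F(y) ≠ ∅, 𝒞*(y) ≥ 𝒞*(x) + Σ_{j=1}^Q λ_j (y_j − x_j). -/
open Finset Set

/-- The minimum achievable system cost for a load vector x. -/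
noncomputable def minCost {Q : ℕ} (C : Fin Q → ℝ) (p : Fin Q → Fin Q → ℝ)
    (x : Fin Q → ℝ) : ℝ :=
  sInf (cost C p '' feasLoad C x)

/-!
The total cost is convex with partial derivatives the payoffs, so it lies above its tangent planes.
At `X` satisfying the Wardrop conditions, complementary slackness lets one replace the payoffs
`F_j^i(X)` in the first-order term by `λ_j`: the two agree where `x_j^i > 0`, and elsewhere
`y_j^i - x_j^i ≥ 0`. The first-order term is then at least `∑ λ_j (y_j - x_j)`, uniformly over the
states carrying load `y`. The case `y = x` shows that `X` attains the minimum cost.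
-/

/-- The Wardrop conditions: each mTracker `j` sends demand only to options whose payoff at `X` is
the least available to it, `lam j`. Feasibility and the load vector are kept separate, and where
row `j` of `X` vanishes `lam j` is only a lower bound of the payoffs. -/
structure IsWardropEquilibrium_s11 {Q : ℕ} (C : Fin Q → ℝ) (p X : Fin Q → Fin Q → ℝ)
    (lam : Fin Q → ℝ) : Prop where
  payoff_eq : ∀ j i, 0 < X j i → payoff C p X j i = lam j
  le_payoff : ∀ j i, lam j ≤ payoff C p X j i

theorem mul_sum_sub_sum_le_sum_mul_sub {ι R : Type*} [CommRing R] [PartialOrder R]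
    [IsOrderedRing R] {s : Finset ι} {f a b : ι → R} {c : R}
    (hf : ∀ i ∈ s, a i ≠ 0 → f i = c) (hc : ∀ i ∈ s, c ≤ f i) (hb : ∀ i ∈ s, 0 ≤ b i) :
    c * (∑ i ∈ s, b i - ∑ i ∈ s, a i) ≤ ∑ i ∈ s, f i * (b i - a i) := by
  rw [← Finset.sum_sub_distrib, Finset.mul_sum]
  refine Finset.sum_le_sum fun i hi => ?_
  by_cases ha : a i = 0
  · rw [ha, sub_zero]
    exact mul_le_mul_of_nonneg_right (hc i hi) (hb i hi)
  · rw [hf i hi ha]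

section Congestion

variable {K : Type*} [Field K] {c s t : K}

theorem div_sub_self_eq_tangent_add (hs : s ≠ c) (ht : t ≠ c) :
    t / (c - t) = s / (c - s) + (1 / (c - s) + s / (c - s) ^ 2) * (t - s)
      + c * (t - s) ^ 2 / ((c - t) * (c - s) ^ 2) := by
  have hs' : c - s ≠ 0 := sub_ne_zero.2 hs.symm
  have ht' : c - t ≠ 0 := sub_ne_zero.2 ht.symm
  field_simp
  ring

theorem tangent_le_div_sub_self [LinearOrder K] [IsStrictOrderedRing K]
    (hc : 0 ≤ c) (hs : s < c) (ht : t < c) :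
    s / (c - s) + (1 / (c - s) + s / (c - s) ^ 2) * (t - s) ≤ t / (c - t) := by
  rw [div_sub_self_eq_tangent_add hs.ne ht.ne]
  have : 0 < c - t := sub_pos.2 ht
  exact le_add_of_nonneg_right (by positivity)

end Congestion

section Cost

variable {Q : ℕ} {C lam x y : Fin Q → ℝ} {p X Y : Fin Q → Fin Q → ℝ}

theorem capacity_pos_of_mem_feasible (hX : X ∈ feasible C) (i : Fin Q) : 0 < C i :=
  (Finset.sum_nonneg fun j _ => hX.1 j i).trans_lt (hX.2 i)

theorem sum_payoff_mul_sub (C : Fin Q → ℝ) (p X Y : Fin Q → Fin Q → ℝ) (i : Fin Q) :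
    ∑ j, payoff C p X j i * (Y j i - X j i)
      = (1 / (C i - ∑ l, X l i) + (∑ l, X l i) / (C i - ∑ l, X l i) ^ 2)
          * (∑ l, Y l i - ∑ l, X l i) + (∑ r, p r i * Y r i - ∑ r, p r i * X r i) := by
  rw [← Finset.sum_sub_distrib, ← Finset.sum_sub_distrib, Finset.mul_sum,
    ← Finset.sum_add_distrib]
  refine Finset.sum_congr rfl fun j _ => ?_
  unfold payoff
  ring

theorem cost_add_sum_payoff_mul_sub_le (p : Fin Q → Fin Q → ℝ)
    (hX : X ∈ feasible C) (hY : Y ∈ feasible C) :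
    cost C p X + ∑ i, ∑ j, payoff C p X j i * (Y j i - X j i) ≤ cost C p Y := by
  unfold cost
  rw [← Finset.sum_add_distrib]
  refine Finset.sum_le_sum fun i _ => ?_
  have tangent := tangent_le_div_sub_self (capacity_pos_of_mem_feasible hX i).le (hX.2 i) (hY.2 i)
  rw [sum_payoff_mul_sub]
  linarith

namespace IsWardropEquilibrium_s11

theorem sum_mul_sub_le_sum_payoff_mul_sub (hW : IsWardropEquilibrium_s11 C p X lam)
    (hX : ∀ j i, 0 ≤ X j i) (hY : ∀ j i, 0 ≤ Y j i) :
    ∑ j, lam j * (∑ i, Y j i - ∑ i, X j i)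
      ≤ ∑ j, ∑ i, payoff C p X j i * (Y j i - X j i) :=
  Finset.sum_le_sum fun j _ => mul_sum_sub_sum_le_sum_mul_sub
    (fun i _ hne => hW.payoff_eq j i ((hX j i).lt_of_ne' hne))
    (fun i _ => hW.le_payoff j i) (fun i _ => hY j i)

theorem cost_add_sum_mul_sub_le (hW : IsWardropEquilibrium_s11 C p X lam)
    (hX : X ∈ feasLoad C x) (hY : Y ∈ feasLoad C y) :
    cost C p X + ∑ j, lam j * (y j - x j) ≤ cost C p Y := by
  obtain ⟨hXfeas, hXload⟩ := hX
  obtain ⟨hYfeas, hYload⟩ := hY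
  calc cost C p X + ∑ j, lam j * (y j - x j)
      = cost C p X + ∑ j, lam j * (∑ i, Y j i - ∑ i, X j i) := by simp only [hXload, hYload]
    _ ≤ cost C p X + ∑ j, ∑ i, payoff C p X j i * (Y j i - X j i) := by
        gcongr cost C p X + ?_
        exact hW.sum_mul_sub_le_sum_payoff_mul_sub hXfeas.1 hYfeas.1
    _ = cost C p X + ∑ i, ∑ j, payoff C p X j i * (Y j i - X j i) := by rw [Finset.sum_comm]
    _ ≤ cost C p Y := cost_add_sum_payoff_mul_sub_le p hXfeas hYfeas

theorem minCost_eq (hW : IsWardropEquilibrium_s11 C p X lam) (hX : X ∈ feasLoad C x) :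
    minCost C p x = cost C p X := by
  refine IsLeast.csInf_eq ⟨Set.mem_image_of_mem _ hX, Set.forall_mem_image.2 fun Y hY => ?_⟩
  simpa only [sub_self, mul_zero, Finset.sum_const_zero, add_zero]
    using hW.cost_add_sum_mul_sub_le hX hY

end IsWardropEquilibrium_s11

theorem wardrop_payoffs_subgradient_general (hW : IsWardropEquilibrium_s11 C p X lam)
    (hX : X ∈ feasLoad C x) (hy : (feasLoad C y).Nonempty) :
    minCost C p x + ∑ j, lam j * (y j - x j) ≤ minCost C p y := by
  rw [hW.minCost_eq hX]
  exact le_csInf (hy.image _)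
    (Set.forall_mem_image.2 fun _ hY => hW.cost_add_sum_mul_sub_le hX hY)

end Cost

/-- The common Wardrop payoffs λ_j at a global minimizer X* of the cost over F(x)
form a subgradient of the minimum system cost function 𝒞* at x. -/
theorem wardrop_payoffs_subgradient (Q : ℕ) (hQ : 1 ≤ Q)
    (C : Fin Q → ℝ) (hC : ∀ i, 0 < C i)
    (p : Fin Q → Fin Q → ℝ) (hp : ∀ j i, 0 ≤ p j i)
    (x : Fin Q → ℝ) (hx : ∀ j, 0 < x j)
    (Xs : Fin Q → Fin Q → ℝ) (hXs : Xs ∈ feasLoad C x)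
    (hmin : ∀ Y ∈ feasLoad C x, cost C p Xs ≤ cost C p Y)
    (lam : Fin Q → ℝ)
    (hlam1 : ∀ j i, 0 < Xs j i → payoff C p Xs j i = lam j)
    (hlam2 : ∀ j i, lam j ≤ payoff C p Xs j i)
    (y : Fin Q → ℝ) (hy : ∀ j, 0 < y j) (hyne : (feasLoad C y).Nonempty) :
    minCost C p x + ∑ j, lam j * (y j - x j) ≤ minCost C p y :=
  wardrop_payoffs_subgradient_general ⟨hlam1, hlam2⟩ hXs hyne
end

section
/- Let D : ℝ_{>0}^Q → ℝ be differentiable, let w_1,…,w_Q > 0, and let V(x) = Σ_{j=1}^Q w_j log x_j − D(x). Let x : [0, T) → ℝ_{>0}^Q be a differentiable trajectory satisfying the admission control dynamics d/dt x_j(t) = w_j − x_j(t) ∂D/∂x_j(x(t)) for all j. Then d/dt V(x(t)) = Σ_{j=1}^Q (d/dt x_j(t))² / x_j(t) ≥ 0; in particular, t ↦ V(x(t)) is nondecreasing on [0, T). -/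
open Finset

/-! Wherever all `x j > 0`, the admission control dynamics reads `ẋ_j = x_j ∂V/∂x_j`: it is the
gradient ascent flow of the net utility `V` for the Riemannian metric `∑ j, dx_j² / x_j` on the
positive orthant. The growth rate of `V` along a trajectory is therefore the squared speed
`∑ j, ẋ_j² / x_j`. -/

section GradientFlow

variable {𝕜 ι : Type*} [NontriviallyNormedField 𝕜] [Fintype ι] [DecidableEq ι]

theorem hasDerivAt_comp_of_hasDerivAt_pi {f : (ι → 𝕜) → 𝕜} {f' : (ι → 𝕜) →L[𝕜] 𝕜}
    {x : 𝕜 → ι → 𝕜} {x' : ι → 𝕜} {t : 𝕜} (hf : HasFDerivAt f f' (x t))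
    (hx : ∀ j, HasDerivAt (fun s => x s j) (x' j) t) :
    HasDerivAt (fun s => f (x s)) (∑ j, x' j * f' (Pi.single j 1)) t := by
  have hcomp : HasDerivAt (fun s => f (x s)) (f' x') t :=
    hf.comp_hasDerivAt t (hasDerivAt_pi.2 hx)
  refine hcomp.congr_deriv ?_
  calc f' x' = f' (∑ j, x' j • Pi.single j 1) := congrArg f' (pi_eq_sum_univ' x')
    _ = ∑ j, x' j * f' (Pi.single j 1) := by simp only [map_sum, map_smul, smul_eq_mul]

theorem hasDerivAt_comp_of_diagonal_gradient_flow {f : (ι → 𝕜) → 𝕜} {f' : (ι → 𝕜) →L[𝕜] 𝕜}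
    {x : 𝕜 → ι → 𝕜} {a : ι → 𝕜} {t : 𝕜} (hf : HasFDerivAt f f' (x t)) (ha : ∀ j, a j ≠ 0)
    (hx : ∀ j, HasDerivAt (fun s => x s j) (a j * f' (Pi.single j 1)) t) :
    HasDerivAt (fun s => f (x s)) (∑ j, (a j * f' (Pi.single j 1)) ^ 2 / a j) t := by
  refine (hasDerivAt_comp_of_hasDerivAt_pi hf hx).congr_deriv (sum_congr rfl fun j _ => ?_)
  have haj : a j ≠ 0 := ha j
  field_simp

end GradientFlow

section AdmissionControl

variable {ι : Type*} [Fintype ι]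

/-- The net utility `V(x) = ∑ j, w_j log x_j - D(x)` of the load vector `x`, meant for `x` in the
open positive orthant (elsewhere `Real.log` returns `log |x_j|`, or `0` at `0`). -/
noncomputable def netUtility (w : ι → ℝ) (D : (ι → ℝ) → ℝ) (x : ι → ℝ) : ℝ :=
  (∑ j, w j * Real.log (x j)) - D x

theorem hasFDerivAt_netUtility (w : ι → ℝ) {D : (ι → ℝ) → ℝ} {D' : (ι → ℝ) →L[ℝ] ℝ} {x : ι → ℝ}
    (hD : HasFDerivAt D D' x) (hx : ∀ j, x j ≠ 0) :
    HasFDerivAt (netUtility w D)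
      ((∑ j, w j • (x j)⁻¹ • ContinuousLinearMap.proj (R := ℝ) (φ := fun _ : ι => ℝ) j) - D') x :=
  (HasFDerivAt.fun_sum fun j _ => ((hasFDerivAt_apply j x).log (hx j)).const_mul (w j)).sub hD

variable [DecidableEq ι]

/-- The vector field of the admission control dynamics, with `j`-th component
`w_j - x_j ∂D/∂x_j(x)`; the partial derivative is the value of `fderiv ℝ D x` on the `j`-th
basis vector. -/
noncomputable def admissionDrift (w : ι → ℝ) (D : (ι → ℝ) → ℝ) (x : ι → ℝ) (j : ι) : ℝ :=
  w j - x j * fderiv ℝ D x (Pi.single j 1)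

theorem admissionDrift_eq_mul_fderiv_netUtility (w : ι → ℝ) {D : (ι → ℝ) → ℝ} {x : ι → ℝ}
    (hD : DifferentiableAt ℝ D x) (hx : ∀ j, x j ≠ 0) (j : ι) :
    admissionDrift w D x j = x j * fderiv ℝ (netUtility w D) x (Pi.single j 1) := by
  have hpartial : fderiv ℝ (netUtility w D) x (Pi.single j 1) =
      w j / x j - fderiv ℝ D x (Pi.single j 1) := by
    rw [(hasFDerivAt_netUtility w hD.hasFDerivAt hx).fderiv]
    simp [Pi.single_apply, div_eq_mul_inv]
  rw [admissionDrift, hpartial, mul_sub, mul_div_cancel₀ _ (hx j)]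

theorem hasDerivAt_netUtility_of_admissionDrift {w : ι → ℝ} {D : (ι → ℝ) → ℝ} {x : ℝ → ι → ℝ}
    {t : ℝ} (hD : DifferentiableAt ℝ D (x t)) (hne : ∀ j, x t j ≠ 0)
    (hx : ∀ j, HasDerivAt (fun s => x s j) (admissionDrift w D (x t) j) t) :
    HasDerivAt (fun s => netUtility w D (x s)) (∑ j, admissionDrift w D (x t) j ^ 2 / x t j) t := by
  have hV := (hasFDerivAt_netUtility w hD.hasFDerivAt hne).differentiableAt.hasFDerivAt
  simp only [admissionDrift_eq_mul_fderiv_netUtility w hD hne] at hx ⊢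
  exact hasDerivAt_comp_of_diagonal_gradient_flow hV hne hx

theorem netUtility_nondecreasing_along_admission_control_general {w : ι → ℝ} {D : (ι → ℝ) → ℝ}
    {x : ℝ → ι → ℝ} {S : Set ℝ} (hS : Convex ℝ S) (hD : ∀ t ∈ S, DifferentiableAt ℝ D (x t))
    (hpos : ∀ t ∈ S, ∀ j, 0 < x t j)
    (hdyn : ∀ t ∈ S, ∀ j, HasDerivAt (fun s => x s j) (admissionDrift w D (x t) j) t) :
    (∀ t ∈ S,
      HasDerivAt (fun s => netUtility w D (x s)) (∑ j, admissionDrift w D (x t) j ^ 2 / x t j) t ∧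
      0 ≤ ∑ j, admissionDrift w D (x t) j ^ 2 / x t j) ∧
    MonotoneOn (fun t => netUtility w D (x t)) S := by
  have hderiv : ∀ t ∈ S, HasDerivAt (fun s => netUtility w D (x s))
      (∑ j, admissionDrift w D (x t) j ^ 2 / x t j) t := fun t ht =>
    hasDerivAt_netUtility_of_admissionDrift (hD t ht) (fun j => (hpos t ht j).ne') (hdyn t ht)
  have hnonneg : ∀ t ∈ S, 0 ≤ ∑ j, admissionDrift w D (x t) j ^ 2 / x t j := fun t ht =>
    sum_nonneg fun j _ => div_nonneg (sq_nonneg _) (hpos t ht j).le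
  exact ⟨fun t ht => ⟨hderiv t ht, hnonneg t ht⟩,
    monotoneOn_of_hasDerivWithinAt_nonneg hS
      (fun t ht => (hderiv t ht).continuousAt.continuousWithinAt)
      (fun t ht => (hderiv t (interior_subset ht)).hasDerivWithinAt)
      fun t ht => hnonneg t (interior_subset ht)⟩

end AdmissionControl

/-- Along any trajectory of the admission control dynamics ẋ_j = w_j − x_j ∂D/∂x_j(x),
the net utility V(x) = Σ_j w_j log x_j − D(x) has derivative Σ_j ẋ_j²/x_j ≥ 0 along the
trajectory; in particular it is nondecreasing. -/
theorem netUtility_nondecreasing_along_admission_control (Q : ℕ) (hQ : 1 ≤ Q)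
    (D : (Fin Q → ℝ) → ℝ)
    (hD : ∀ x : Fin Q → ℝ, (∀ j, 0 < x j) → DifferentiableAt ℝ D x)
    (w : Fin Q → ℝ) (hw : ∀ j, 0 < w j)
    (T : ℝ) (x : ℝ → Fin Q → ℝ)
    (hpos : ∀ t ∈ Set.Ico (0:ℝ) T, ∀ j, 0 < x t j)
    (hdyn : ∀ t ∈ Set.Ico (0:ℝ) T, ∀ j,
      HasDerivAt (fun s => x s j)
        (w j - x t j * (fderiv ℝ D (x t) (Pi.single j 1))) t) :
    (∀ t ∈ Set.Ico (0:ℝ) T,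
      HasDerivAt (fun s => (∑ j, w j * Real.log (x s j)) - D (x s))
        (∑ j, (w j - x t j * (fderiv ℝ D (x t) (Pi.single j 1))) ^ 2 / x t j) t ∧
      0 ≤ ∑ j, (w j - x t j * (fderiv ℝ D (x t) (Pi.single j 1))) ^ 2 / x t j) ∧
    MonotoneOn (fun t => (∑ j, w j * Real.log (x t j)) - D (x t)) (Set.Ico (0:ℝ) T) := by
  exact netUtility_nondecreasing_along_admission_control_general (convex_Ico 0 T)
    (fun t ht => hD (x t) (hpos t ht)) hpos hdyn
end
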